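/- Let A be a linear relation between X and Z and B a linear relation between Y and Z. Then A = B∘(B⁻¹)∘A if and only if mul B ⊆ ran A ⊆ ran B and A⁻¹(mul B) ⊆ ker A. In particular, if B is (the graph of) an operator (mul B = {0}) and ran A ⊆ ran B, then the linear relation C = (B⁻¹)∘A satisfies A = B∘C. -/

import Mathlib

/-!
Linear relations between vector spaces, following Popovici–Sebestyén,
"Factorizations of Linear Relations".

A linear relation between `X` and `Y` is a linear subspace of `X × Y`,
formalized as `Submodule 𝕂 (X × Y)`.
-/

universe u

namespace LinRel

variable {𝕂 : Type u} [Field 𝕂]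
variable {X Y Z : Type u} [AddCommGroup X] [Module 𝕂 X]
  [AddCommGroup Y] [Module 𝕂 Y] [AddCommGroup Z] [Module 𝕂 Z]

/-- The domain of a linear relation. -/
def dom (R : Submodule 𝕂 (X × Y)) : Submodule 𝕂 X :=
  R.map (LinearMap.fst 𝕂 X Y)

/-- The range of a linear relation. -/
def ran (R : Submodule 𝕂 (X × Y)) : Submodule 𝕂 Y :=
  R.map (LinearMap.snd 𝕂 X Y)

/-- The kernel of a linear relation: `{x | (x, 0) ∈ R}`. -/
def ker (R : Submodule 𝕂 (X × Y)) : Submodule 𝕂 X :=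
  R.comap ((LinearMap.id : X →ₗ[𝕂] X).prod (0 : X →ₗ[𝕂] Y))

/-- The multivalued part of a linear relation: `{y | (0, y) ∈ R}`. -/
def mul (R : Submodule 𝕂 (X × Y)) : Submodule 𝕂 Y :=
  R.comap ((0 : Y →ₗ[𝕂] X).prod (LinearMap.id : Y →ₗ[𝕂] Y))

/-- The inverse of a linear relation: `{(y, x) | (x, y) ∈ R}`. -/
def inv (R : Submodule 𝕂 (X × Y)) : Submodule 𝕂 (Y × X) :=
  R.map ((LinearMap.snd 𝕂 X Y).prod (LinearMap.fst 𝕂 X Y))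

/-- The product (composition) of two linear relations:
`S ∘ R = {(x, z) | ∃ y, (x, y) ∈ R ∧ (y, z) ∈ S}`. -/
def comp (S : Submodule 𝕂 (Y × Z)) (R : Submodule 𝕂 (X × Y)) : Submodule 𝕂 (X × Z) where
  carrier := {p | ∃ y, (p.1, y) ∈ R ∧ (y, p.2) ∈ S}
  add_mem' := by
    rintro ⟨a, c⟩ ⟨a', c'⟩ ⟨y, h1, h2⟩ ⟨y', h1', h2'⟩
    exact ⟨y + y', R.add_mem h1 h1', S.add_mem h2 h2'⟩
  zero_mem' := ⟨0, R.zero_mem, S.zero_mem⟩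
  smul_mem' := by
    rintro c ⟨a, b⟩ ⟨y, h1, h2⟩
    exact ⟨c • y, R.smul_mem c h1, S.smul_mem c h2⟩

/-- The image `R(X₀)` of a subspace `X₀` under a linear relation `R`. -/
def img (R : Submodule 𝕂 (X × Y)) (X₀ : Submodule 𝕂 X) : Submodule 𝕂 Y :=
  ran (R ⊓ X₀.prod ⊤)

/-- The preimage `R⁻¹(Y₀)` of a subspace `Y₀` under a linear relation `R`. -/
def preimg (R : Submodule 𝕂 (X × Y)) (Y₀ : Submodule 𝕂 Y) : Submodule 𝕂 X :=
  img (inv R) Y₀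

end LinRel


open LinRel

variable {𝕂 : Type u} [Field 𝕂]
variable {X Y Z : Type u} [AddCommGroup X] [Module 𝕂 X]
  [AddCommGroup Y] [Module 𝕂 Y] [AddCommGroup Z] [Module 𝕂 Z]

/-!
The inclusion `A ⊆ B B⁻¹ A` amounts to `ran A ⊆ ran B`, and the reverse inclusion to
`mul B ⊆ mul A`: if `(x, w) ∈ A` and `(y, w), (y, z) ∈ B`, then `z - w ∈ mul B`, and `(x, z) ∈ A`
is equivalent to `z - w ∈ mul A`. The conditions `mul B ⊆ ran A` and `A⁻¹(mul B) ⊆ ker A`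
together express `mul B ⊆ mul A`, because for `(x, z) ∈ A` one has `x ∈ ker A` exactly when
`z ∈ mul A`.
-/

namespace LinRel

section Membership

variable {R : Submodule 𝕂 (X × Y)} {S : Submodule 𝕂 (Y × Z)} {x : X} {y y' : Y} {z : Z}

theorem mem_ran : y ∈ ran R ↔ ∃ x, (x, y) ∈ R := by
  simp [ran]

theorem mem_ker : x ∈ ker R ↔ (x, 0) ∈ R := Iff.rfl

theorem mem_mul : y ∈ mul R ↔ (0, y) ∈ R := Iff.rfl

theorem mk_mem_inv : (y, x) ∈ inv R ↔ (x, y) ∈ R := by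
  simp [inv]

theorem mk_mem_comp : (x, z) ∈ comp S R ↔ ∃ y, (x, y) ∈ R ∧ (y, z) ∈ S := Iff.rfl

theorem mem_preimg {M : Submodule 𝕂 Y} : x ∈ preimg R M ↔ ∃ y ∈ M, (x, y) ∈ R := by
  simp [preimg, img, mem_ran, mk_mem_inv, and_comm]

theorem mk_mem_iff_sub_mem_mul (h : (x, y) ∈ R) : (x, y') ∈ R ↔ y' - y ∈ mul R := by
  rw [mem_mul, ← R.sub_mem_iff_left h, Prod.mk_sub_mk, sub_self]

theorem mem_ker_iff_mem_mul (h : (x, y) ∈ R) : x ∈ ker R ↔ y ∈ mul R := by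
  rw [mem_ker, mk_mem_iff_sub_mem_mul h, zero_sub, neg_mem_iff]

end Membership

theorem ran_mono {R R' : Submodule 𝕂 (X × Y)} (h : R ≤ R') : ran R ≤ ran R' :=
  Submodule.map_mono h

theorem mul_mono {R R' : Submodule 𝕂 (X × Y)} (h : R ≤ R') : mul R ≤ mul R' :=
  Submodule.comap_mono h

theorem ran_comp_le (S : Submodule 𝕂 (Y × Z)) (R : Submodule 𝕂 (X × Y)) :
    ran (comp S R) ≤ ran S := by
  intro z hz
  obtain ⟨x, hxz⟩ := mem_ran.1 hz
  obtain ⟨y, -, hyz⟩ := mk_mem_comp.1 hxz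
  exact mem_ran.2 ⟨y, hyz⟩

theorem mul_le_mul_comp (S : Submodule 𝕂 (Y × Z)) (R : Submodule 𝕂 (X × Y)) :
    mul S ≤ mul (comp S R) :=
  fun _ hz ↦ mk_mem_comp.2 ⟨0, R.zero_mem, mem_mul.1 hz⟩

theorem le_mul_iff {R : Submodule 𝕂 (X × Y)} {M : Submodule 𝕂 Y} :
    M ≤ mul R ↔ M ≤ ran R ∧ preimg R M ≤ ker R := by
  refine ⟨fun hM ↦ ⟨fun y hy ↦ mem_ran.2 ⟨0, hM hy⟩, fun x hx ↦ ?_⟩,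
    fun ⟨hran, hker⟩ y hy ↦ ?_⟩
  · obtain ⟨y, hy, hxy⟩ := mem_preimg.1 hx
    exact (mem_ker_iff_mem_mul hxy).2 (hM hy)
  · obtain ⟨x, hxy⟩ := mem_ran.1 (hran hy)
    exact (mem_ker_iff_mem_mul hxy).1 (hker (mem_preimg.2 ⟨y, hy, hxy⟩))

section Factorization

variable {A : Submodule 𝕂 (X × Z)} {B : Submodule 𝕂 (Y × Z)}

theorem le_comp_comp_inv_iff : A ≤ comp B (comp (inv B) A) ↔ ran A ≤ ran B := by
  refine ⟨fun h ↦ (ran_mono h).trans (ran_comp_le _ _), fun h ⟨x, z⟩ hxz ↦ ?_⟩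
  obtain ⟨y, hyz⟩ := mem_ran.1 (h (mem_ran.2 ⟨x, hxz⟩))
  exact mk_mem_comp.2 ⟨y, mk_mem_comp.2 ⟨z, hxz, mk_mem_inv.2 hyz⟩, hyz⟩

theorem comp_comp_inv_le_iff : comp B (comp (inv B) A) ≤ A ↔ mul B ≤ mul A := by
  refine ⟨fun h ↦ (mul_le_mul_comp _ _).trans (mul_mono h), fun h ⟨x, z⟩ hxz ↦ ?_⟩
  obtain ⟨y, hxy, hyz⟩ := mk_mem_comp.1 hxz
  obtain ⟨w, hxw, hwy⟩ := mk_mem_comp.1 hxy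
  have hsub : z - w ∈ mul B := (mk_mem_iff_sub_mem_mul (mk_mem_inv.1 hwy)).1 hyz
  exact (mk_mem_iff_sub_mem_mul hxw).2 (h hsub)

theorem eq_comp_comp_inv_iff :
    A = comp B (comp (inv B) A) ↔ ran A ≤ ran B ∧ mul B ≤ mul A := by
  rw [le_antisymm_iff, le_comp_comp_inv_iff, comp_comp_inv_le_iff]

end Factorization

end LinRel

/-- Corollary 2.4: `A = B B⁻¹ A` iff `mul B ⊆ ran A ⊆ ran B` and
`A⁻¹(mul B) ⊆ ker A`; in particular, if `B` is an operator with
`ran A ⊆ ran B` then `C = B⁻¹ A` satisfies `A = BC`. -/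
theorem statement_4 (A : Submodule 𝕂 (X × Z)) (B : Submodule 𝕂 (Y × Z)) :
    (A = comp B (comp (inv B) A) ↔
      (mul B ≤ ran A ∧ ran A ≤ ran B ∧ preimg A (mul B) ≤ ker A)) ∧
    (mul B = ⊥ → ran A ≤ ran B → A = comp B (comp (inv B) A)) := by
  constructor
  · rw [eq_comp_comp_inv_iff, le_mul_iff, and_left_comm]
  · intro hmul hran
    exact eq_comp_comp_inv_iff.2 ⟨hran, hmul.trans_le bot_le⟩
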